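/- The intersection of the Markov spectrum M with the open interval (4√6/3, (18879+800√30)/7089) consists of exactly one point, namely √689/8, which is therefore an isolated point of M. Moreover, both endpoints 4√6/3 and (18879+800√30)/7089 belong to M. -/

import Mathlib

open Filter Set MeasureTheory
open scoped ENNReal

/-- Finite continued fraction `[a 0; a 1, ..., a n]`. -/
noncomputable def cfConv : (ℕ → ℝ) → ℕ → ℝ
  | a, 0 => a 0
  | a, n + 1 => a 0 + 1 / cfConv (fun i => a (i + 1)) n

/-- Value of the infinite continued fraction `[a 0; a 1, a 2, ...]`,
as the limit of its convergents. -/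
noncomputable def cfVal (a : ℕ → ℝ) : ℝ := limUnder atTop (cfConv a)

/-- `λ_k(α) = [α_k; α_{k+1}, ...] + [0; α_{k-1}, α_{k-2}, ...]`. -/
noncomputable def lambdaVal (α : ℤ → ℕ) (k : ℤ) : ℝ :=
  cfVal (fun n => (α (k + n) : ℝ)) +
  cfVal (fun n => if n = 0 then 0 else (α (k - n) : ℝ))

/-- The Markov value `m(α) = sup_{k ∈ ℤ} λ_k(α)`. -/
noncomputable def markovValue (α : ℤ → ℕ) : ℝ := ⨆ k : ℤ, lambdaVal α k

/-- The Markov spectrum. -/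
def markovSpectrum : Set ℝ :=
  { x | ∃ α : ℤ → ℕ, (∀ n, 0 < α n) ∧ BddAbove (range (lambdaVal α)) ∧
      markovValue α = x }

/-- The dimension function `d(t) = dim_H (M ∩ (-∞, t))`. -/
noncomputable def dimFun (t : ℝ) : ℝ≥0∞ := dimH (markovSpectrum ∩ Iio t)

/-! ### Convergence of continued fractions -/

lemma one_le_cfConv {a : ℕ → ℝ} (ha : ∀ i, 1 ≤ a i) (n : ℕ) : 1 ≤ cfConv a n := by
  induction n generalizing a with
  | zero => exact ha 0
  | succ n ih =>
    have h := ih (a := fun i => a (i + 1)) fun i => ha _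
    have : 0 ≤ 1 / cfConv (fun i => a (i + 1)) n := by positivity
    have := ha 0
    simp only [cfConv]
    linarith

lemma cfConv_mem_Icc {a : ℕ → ℝ} (ha : ∀ i, 1 ≤ a i) (n : ℕ) :
    cfConv a n ∈ Icc (a 0) (a 0 + 1) := by
  cases n with
  | zero => simp [cfConv]
  | succ n =>
    have h := one_le_cfConv (a := fun i => a (i + 1)) (fun i => ha _) n
    have h0 : 0 ≤ 1 / cfConv (fun i => a (i + 1)) n := by positivity
    have h1 : 1 / cfConv (fun i => a (i + 1)) n ≤ 1 := by
      rw [div_le_one (by linarith)]; exact h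
    simp only [cfConv, mem_Icc]
    constructor <;> linarith

lemma abs_cfStep_sub_le {b c x y : ℝ} (hc : 1 ≤ c) (hx : 1 ≤ x) (hy : 1 ≤ y) :
    |(b + 1 / (c + 1 / x)) - (b + 1 / (c + 1 / y))| ≤ |x - y| / 4 := by
  have hcx : 2 ≤ c * x + 1 := by nlinarith
  have hcy : 2 ≤ c * y + 1 := by nlinarith
  have key : (b + 1 / (c + 1 / x)) - (b + 1 / (c + 1 / y))
      = (x - y) / ((c * x + 1) * (c * y + 1)) := by
    field_simp
    ring
  rw [key, abs_div, abs_of_pos (by positivity : 0 < (c * x + 1) * (c * y + 1))]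
  exact div_le_div_of_nonneg_left (abs_nonneg _) (by norm_num) (by nlinarith)

lemma abs_cfConv_sub_le {a : ℕ → ℝ} (ha : ∀ i, 1 ≤ a i) (j n m : ℕ) :
    |cfConv a (n + 2 * j) - cfConv a (m + 2 * j)| ≤ (1 / 4) ^ j := by
  induction j generalizing a with
  | zero =>
    have h1 := cfConv_mem_Icc ha n
    have h2 := cfConv_mem_Icc ha m
    simp only [mem_Icc] at h1 h2
    simp only [mul_zero, add_zero, pow_zero, abs_le]
    constructor <;> linarith
  | succ j ih =>
    have hs : ∀ i, 1 ≤ (fun i => a (i + 1 + 1)) i := fun i => ha _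
    have h := abs_cfStep_sub_le (b := a 0) (ha (0 + 1)) (one_le_cfConv hs (n + 2 * j))
      (one_le_cfConv hs (m + 2 * j))
    have h' := ih hs
    rw [show n + 2 * (j + 1) = n + 2 * j + 1 + 1 by ring,
      show m + 2 * (j + 1) = m + 2 * j + 1 + 1 by ring]
    simp only [cfConv]
    calc _ ≤ _ := h
      _ ≤ (1 / 4) ^ (j + 1) := by rw [pow_succ]; linarith

lemma tendsto_cfConv {a : ℕ → ℝ} (ha : ∀ i, 1 ≤ a i) :
    Tendsto (cfConv a) atTop (nhds (cfVal a)) := by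
  refine tendsto_nhds_limUnder (cauchySeq_tendsto_of_complete
    (Metric.cauchySeq_iff'.2 fun ε hε => ?_))
  obtain ⟨j, hj⟩ := exists_pow_lt_of_lt_one hε (by norm_num : (1 / 4 : ℝ) < 1)
  refine ⟨2 * j, fun n hn => ?_⟩
  obtain ⟨i, rfl⟩ := Nat.exists_eq_add_of_le' hn
  have := abs_cfConv_sub_le ha j i 0
  rw [zero_add] at this
  exact this.trans_lt hj

lemma one_le_cfVal {a : ℕ → ℝ} (ha : ∀ i, 1 ≤ a i) : 1 ≤ cfVal a :=
  ge_of_tendsto' (tendsto_cfConv ha) (one_le_cfConv ha)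

lemma cfVal_eq_add {a : ℕ → ℝ} (ha : ∀ i, 1 ≤ a (i + 1)) :
    cfVal a = a 0 + 1 / cfVal fun i => a (i + 1) := by
  have h1 := one_le_cfVal (a := fun i => a (i + 1)) ha
  have h := ((tendsto_const_nhds (x := (1 : ℝ))).div (tendsto_cfConv (a := fun i => a (i + 1)) ha)
    (by linarith)).const_add (a 0)
  exact ((tendsto_add_atTop_iff_nat 1).1 h).limUnder_eq

/-! ### One-sided continued fractions of a bi-infinite sequence -/

/-- The continued fraction `[0; α (k + 1), α (k + 2), ...]`. -/
noncomputable def rightVal (α : ℤ → ℕ) (k : ℤ) : ℝ :=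
  1 / cfVal fun n => (α (k + 1 + n) : ℝ)

/-- The continued fraction `[0; α (k - 1), α (k - 2), ...]`. -/
noncomputable def leftVal (α : ℤ → ℕ) (k : ℤ) : ℝ := rightVal (fun n => α (-n)) (-k)

section

variable {α β : ℤ → ℕ} {k : ℤ}

lemma rightVal_congr {j : ℤ} (h : ∀ n : ℕ, α (k + 1 + n) = β (j + 1 + n)) :
    rightVal α k = rightVal β j := by
  simp only [rightVal, h]

lemma leftVal_eq_rightVal {j : ℤ} (h : ∀ n : ℕ, α (k - 1 - n) = β (j + 1 + n)) :
    leftVal α k = rightVal β j :=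
  rightVal_congr fun n => by rw [← h]; congr 1; ring

lemma rightVal_eq_leftVal_neg : rightVal α k = leftVal (fun n => α (-n)) (-k) := by
  simp [leftVal]

lemma rightVal_rec (hα : ∀ n, 0 < α n) : rightVal α k = 1 / (α (k + 1) + rightVal α (k + 1)) := by
  have h := cfVal_eq_add (a := fun n => (α (k + 1 + n) : ℝ)) fun i => by exact_mod_cast hα _
  rw [rightVal, h, rightVal]
  simp only [Nat.cast_zero, add_zero]
  congr 6
  ext n
  congr 2
  push_cast
  ring

lemma leftVal_rec (hα : ∀ n, 0 < α n) : leftVal α k = 1 / (α (k - 1) + leftVal α (k - 1)) := by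
  have h := rightVal_rec (α := fun n => α (-n)) (k := -k) fun n => hα _
  rw [leftVal, h, leftVal]
  simp only [neg_add, neg_neg, neg_sub]
  rw [show k + -1 = k - 1 by ring, show -k + 1 = 1 - k by ring]

lemma rightVal_pos (hα : ∀ n, 0 < α n) : 0 < rightVal α k := by
  have := one_le_cfVal (a := fun n => (α (k + 1 + n) : ℝ)) fun i => by exact_mod_cast hα _
  rw [rightVal]
  positivity

lemma leftVal_pos (hα : ∀ n, 0 < α n) : 0 < leftVal α k := rightVal_pos fun _ => hα _

lemma lambdaVal_eq (hα : ∀ n, 0 < α n) :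
    lambdaVal α k = α k + rightVal α k + leftVal α k := by
  have h1 := cfVal_eq_add (a := fun n => (α (k + n) : ℝ)) fun i => by exact_mod_cast hα _
  have h2 := cfVal_eq_add (a := fun n => if n = 0 then 0 else (α (k - n) : ℝ)) fun i => by
    simpa [Nat.one_le_iff_ne_zero, ← Nat.pos_iff_ne_zero] using hα _
  rw [lambdaVal, h1, h2, leftVal, rightVal, rightVal]
  simp only [Nat.cast_zero, add_zero, if_true, zero_add, Nat.add_eq_zero_iff, one_ne_zero,
    and_false, if_false]
  congr 5 <;> ext n <;> congr 2 <;> push_cast <;> ring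

lemma lambdaVal_neg (hα : ∀ n, 0 < α n) : lambdaVal (fun n => α (-n)) (-k) = lambdaVal α k := by
  rw [lambdaVal_eq hα, lambdaVal_eq fun n => hα _, rightVal_eq_leftVal_neg (α := α)]
  simp only [leftVal, neg_neg]
  ring

end

/-! ### Sequences of ones and twos: bounds from finite windows -/

section

variable {α : ℤ → ℕ} {k : ℤ}

/-- The digits of `α` are all `1` or `2`. -/
def IsOneTwo (α : ℤ → ℕ) : Prop := ∀ n, α n = 1 ∨ α n = 2

lemma IsOneTwo.pos (h : IsOneTwo α) (n : ℤ) : 0 < α n := by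
  rcases h n with h | h <;> omega

lemma IsOneTwo.reflect (h : IsOneTwo α) : IsOneTwo fun n => α (-n) := fun _ => h _

lemma IsOneTwo.rightVal_le_of_le (h : IsOneTwo α) {l : ℝ} (hl : 0 ≤ l)
    (H : ∀ k, l ≤ rightVal α k) (k : ℤ) : rightVal α k ≤ 1 / (1 + l) := by
  rw [rightVal_rec h.pos]
  have h1 := H (k + 1)
  have h2 : (1 : ℝ) ≤ α (k + 1) := by exact_mod_cast h.pos _
  exact one_div_le_one_div_of_le (by linarith) (by linarith)

lemma IsOneTwo.le_rightVal_of_le (h : IsOneTwo α) {u : ℝ}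
    (H : ∀ k, rightVal α k ≤ u) (k : ℤ) : 1 / (2 + u) ≤ rightVal α k := by
  rw [rightVal_rec h.pos]
  have h1 := H (k + 1)
  have h0 := rightVal_pos (k := k + 1) h.pos
  have h2 : (α (k + 1) : ℝ) ≤ 2 := by
    exact_mod_cast (show α (k + 1) ≤ 2 by rcases h (k + 1) with h | h <;> omega)
  have h3 : (0 : ℝ) < α (k + 1) := by exact_mod_cast h.pos _
  exact one_div_le_one_div_of_le (by linarith) (by linarith)

lemma IsOneTwo.rightVal_mem_Icc (h : IsOneTwo α) (k : ℤ) :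
    rightVal α k ∈ Icc (15 / 41 : ℝ) (11 / 15) := by
  have h0 := h.rightVal_le_of_le le_rfl fun k => (rightVal_pos (k := k) h.pos).le
  have h1 := h.le_rightVal_of_le h0
  have h2 := h.rightVal_le_of_le (by norm_num) h1
  have h3 := h.le_rightVal_of_le h2
  have h4 := h.rightVal_le_of_le (by norm_num) h3
  have h5 := h.le_rightVal_of_le h4
  have h4 := h4 k
  have h5 := h5 k
  norm_num at h4 h5
  exact ⟨h5, h4⟩

lemma IsOneTwo.leftVal_mem_Icc (h : IsOneTwo α) (k : ℤ) :
    leftVal α k ∈ Icc (15 / 41 : ℝ) (11 / 15) := h.reflect.rightVal_mem_Icc _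

/-- The digits of `α` to the right of position `k` start with the list. -/
def RightPrefix (α : ℤ → ℕ) : ℤ → List ℕ → Prop
  | _, [] => True
  | k, a :: w => α (k + 1) = a ∧ RightPrefix α (k + 1) w

/-- The digits of `α` to the left of position `k`, read leftwards, start with the list. -/
def LeftPrefix (α : ℤ → ℕ) : ℤ → List ℕ → Prop
  | _, [] => True
  | k, a :: w => α (k - 1) = a ∧ LeftPrefix α (k - 1) w

lemma leftPrefix_iff (w : List ℕ) :
    LeftPrefix α k w ↔ RightPrefix (fun n => α (-n)) (-k) w := by
  induction w generalizing k with
  | nil => rfl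
  | cons a w ih =>
    simp only [LeftPrefix, RightPrefix, ih]
    rw [show -(-k + 1) = k - 1 by ring, show -(k - 1) = -k + 1 by ring]

lemma rightPrefix_iff (w : List ℕ) :
    RightPrefix α k w ↔ LeftPrefix (fun n => α (-n)) (-k) w := by
  simp [leftPrefix_iff]

lemma IsOneTwo.exists_rightPrefix_append (h : IsOneTwo α) {w : List ℕ} (hw : RightPrefix α k w) :
    ∃ a, (a = 1 ∨ a = 2) ∧ RightPrefix α k (w ++ [a]) := by
  induction w generalizing k with
  | nil => exact ⟨_, h (k + 1), rfl, trivial⟩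
  | cons b w ih =>
    obtain ⟨a, ha, h'⟩ := ih hw.2
    exact ⟨a, ha, hw.1, h'⟩

lemma IsOneTwo.exists_leftPrefix_append (h : IsOneTwo α) {w : List ℕ} (hw : LeftPrefix α k w) :
    ∃ a, (a = 1 ∨ a = 2) ∧ LeftPrefix α k (w ++ [a]) := by
  simp only [leftPrefix_iff] at hw ⊢
  exact h.reflect.exists_rightPrefix_append hw

/-- Lower and upper bounds, as pairs (numerator, denominator), for continued fractions `[0; ...]`
with digits `1`, `2` starting with the given list. -/
def cfBounds : List ℕ → (ℕ × ℕ) × (ℕ × ℕ)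
  | [] => ((15, 41), (11, 15))
  | a :: w =>
    (((cfBounds w).2.2, a * (cfBounds w).2.2 + (cfBounds w).2.1),
      ((cfBounds w).1.2, a * (cfBounds w).1.2 + (cfBounds w).1.1))

lemma cfBounds_pos (w : List ℕ) : 0 < (cfBounds w).1.1 ∧ 0 < (cfBounds w).1.2 ∧
    0 < (cfBounds w).2.1 ∧ 0 < (cfBounds w).2.2 := by
  induction w with
  | nil => simp [cfBounds]
  | cons a w ih =>
    obtain ⟨h1, h2, h3, h4⟩ := ih
    simp only [cfBounds]
    exact ⟨h4, by positivity, h2, by positivity⟩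

lemma IsOneTwo.rightVal_bounds (h : IsOneTwo α) {w : List ℕ} (hw : RightPrefix α k w) :
    ((cfBounds w).1.1 : ℝ) / (cfBounds w).1.2 ≤ rightVal α k ∧
      rightVal α k ≤ ((cfBounds w).2.1 : ℝ) / (cfBounds w).2.2 := by
  induction w generalizing k with
  | nil => simpa [cfBounds] using h.rightVal_mem_Icc k
  | cons a w ih =>
    obtain ⟨rfl, hw⟩ := hw
    obtain ⟨h1, h2⟩ := ih hw
    obtain ⟨p1, p2, p3, p4⟩ := cfBounds_pos w
    have hpos := rightVal_pos (k := k + 1) h.pos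
    have ha : (0 : ℝ) < α (k + 1) := by exact_mod_cast h.pos _
    have q1 : (0 : ℝ) < (cfBounds w).1.1 := by exact_mod_cast p1
    have q2 : (0 : ℝ) < (cfBounds w).1.2 := by exact_mod_cast p2
    have q3 : (0 : ℝ) < (cfBounds w).2.1 := by exact_mod_cast p3
    have q4 : (0 : ℝ) < (cfBounds w).2.2 := by exact_mod_cast p4
    rw [rightVal_rec h.pos]
    rw [div_le_iff₀ q2] at h1
    rw [le_div_iff₀ q4] at h2
    simp only [cfBounds]
    push_cast
    constructor
    · rw [div_le_div_iff₀ (by positivity) (by positivity)]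
      nlinarith
    · rw [div_le_div_iff₀ (by positivity) (by positivity)]
      nlinarith

lemma IsOneTwo.leftVal_bounds (h : IsOneTwo α) {w : List ℕ} (hw : LeftPrefix α k w) :
    ((cfBounds w).1.1 : ℝ) / (cfBounds w).1.2 ≤ leftVal α k ∧
      leftVal α k ≤ ((cfBounds w).2.1 : ℝ) / (cfBounds w).2.2 :=
  h.reflect.rightVal_bounds ((leftPrefix_iff w).1 hw)

/-- The sum of the lower bounds attached to two lists is at least `p / q`. -/
def lowerGE (p q : ℕ) (l r : List ℕ) : Bool :=
  p * ((cfBounds l).1.2 * (cfBounds r).1.2) ≤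
    q * ((cfBounds l).1.1 * (cfBounds r).1.2 + (cfBounds r).1.1 * (cfBounds l).1.2)

/-- The sum of the upper bounds attached to two lists is at most `p / q`. -/
def upperLE (p q : ℕ) (l r : List ℕ) : Bool :=
  q * ((cfBounds l).2.1 * (cfBounds r).2.2 + (cfBounds r).2.1 * (cfBounds l).2.2) ≤
    p * ((cfBounds l).2.2 * (cfBounds r).2.2)

lemma IsOneTwo.le_lambdaVal (h : IsOneTwo α) {l r : List ℕ} (hl : LeftPrefix α k l)
    (hr : RightPrefix α k r) {p q : ℕ} (hq : 0 < q) (H : lowerGE p q l r) :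
    (α k : ℝ) + p / q ≤ lambdaVal α k := by
  obtain ⟨-, p2, -, -⟩ := cfBounds_pos l
  obtain ⟨-, r2, -, -⟩ := cfBounds_pos r
  have hq' : (0 : ℝ) < q := by exact_mod_cast hq
  have q2 : (0 : ℝ) < (cfBounds l).1.2 := by exact_mod_cast p2
  have s2 : (0 : ℝ) < (cfBounds r).1.2 := by exact_mod_cast r2
  have h1 := (h.leftVal_bounds hl).1
  have h2 := (h.rightVal_bounds hr).1
  rw [lambdaVal_eq h.pos]
  have H' : (p : ℝ) * ((cfBounds l).1.2 * (cfBounds r).1.2) ≤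
    q * ((cfBounds l).1.1 * (cfBounds r).1.2 + (cfBounds r).1.1 * (cfBounds l).1.2) := by
    exact_mod_cast of_decide_eq_true H
  have : (p : ℝ) / q ≤ ((cfBounds l).1.1 : ℝ) / (cfBounds l).1.2 +
      ((cfBounds r).1.1 : ℝ) / (cfBounds r).1.2 := by
    rw [div_add_div _ _ q2.ne' s2.ne', div_le_div_iff₀ hq' (by positivity)]
    linarith
  linarith

lemma IsOneTwo.lambdaVal_le (h : IsOneTwo α) {l r : List ℕ} (hl : LeftPrefix α k l)
    (hr : RightPrefix α k r) {p q : ℕ} (hq : 0 < q) (H : upperLE p q l r) :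
    lambdaVal α k ≤ (α k : ℝ) + p / q := by
  obtain ⟨-, -, -, p2⟩ := cfBounds_pos l
  obtain ⟨-, -, -, r2⟩ := cfBounds_pos r
  have hq' : (0 : ℝ) < q := by exact_mod_cast hq
  have q2 : (0 : ℝ) < (cfBounds l).2.2 := by exact_mod_cast p2
  have s2 : (0 : ℝ) < (cfBounds r).2.2 := by exact_mod_cast r2
  have h1 := (h.leftVal_bounds hl).2
  have h2 := (h.rightVal_bounds hr).2
  rw [lambdaVal_eq h.pos]
  have H' : (q : ℝ) * ((cfBounds l).2.1 * (cfBounds r).2.2 + (cfBounds r).2.1 * (cfBounds l).2.2) ≤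
    p * ((cfBounds l).2.2 * (cfBounds r).2.2) := by
    exact_mod_cast of_decide_eq_true H
  have : ((cfBounds l).2.1 : ℝ) / (cfBounds l).2.2 +
      ((cfBounds r).2.1 : ℝ) / (cfBounds r).2.2 ≤ (p : ℝ) / q := by
    rw [div_add_div _ _ q2.ne' s2.ne', div_le_div_iff₀ (by positivity) hq']
    linarith
  linarith

lemma RightPrefix.move_right {l r : List ℕ} {a : ℕ} (hr : RightPrefix α k (a :: r))
    (hl : LeftPrefix α k l) :
    LeftPrefix α (k + 1) (α k :: l) ∧ α (k + 1) = a ∧ RightPrefix α (k + 1) r :=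
  ⟨by simpa [LeftPrefix] using hl, hr.1, hr.2⟩

/-! ### Windows around positions with a large value -/

/-- The digits of `α` are `1` and `2`, and all its values are below the right end of the gap. -/
structure Admissible (α : ℤ → ℕ) : Prop where
  isOneTwo : IsOneTwo α
  lambdaVal_lt : ∀ k, lambdaVal α k < (18879 + 800 * Real.sqrt 30) / 7089

lemma Admissible.reflect (h : Admissible α) : Admissible fun n => α (-n) :=
  ⟨h.isOneTwo.reflect, fun k => by
    have := lambdaVal_neg (α := α) (k := -k) h.isOneTwo.pos
    rw [neg_neg] at this
    rw [this]
    exact h.lambdaVal_lt _⟩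

lemma gapRight_lt : (18879 + 800 * Real.sqrt 30) / 7089 < 105 / 32 := by
  have : Real.sqrt 30 < 5.4772265 := by
    rw [Real.sqrt_lt' (by norm_num)]; norm_num
  rw [div_lt_div_iff₀ (by norm_num) (by norm_num)]
  linarith

lemma lt_gapLeft : (2 : ℝ) + (126598 : ℕ) / (100000 : ℕ) < 4 * Real.sqrt 6 / 3 := by
  have : 2.449489 < Real.sqrt 6 := by
    rw [Real.lt_sqrt (by norm_num)]; norm_num
  norm_num at this ⊢
  linarith

lemma Admissible.not_lowerGE (h : Admissible α) (hk : α k = 2) {l r : List ℕ}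
    (hl : LeftPrefix α k l) (hr : RightPrefix α k r) : lowerGE 41 32 l r = false := by
  by_contra H
  have h1 := h.isOneTwo.le_lambdaVal hl hr (by norm_num) (Bool.eq_true_of_not_eq_false H)
  have h2 := h.lambdaVal_lt k
  have h3 := gapRight_lt
  rw [hk] at h1
  norm_num at h1
  linarith

/-- No position at or to the right of the centre of the window `(l, c, r)` has too large a value. -/
def scanRight (l : List ℕ) (c : ℕ) : List ℕ → Bool
  | [] => c != 2 || !lowerGE 41 32 l []
  | a :: r => (c != 2 || !lowerGE 41 32 l (a :: r)) && scanRight (c :: l) a r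

lemma Admissible.scanRight_eq_true (h : Admissible α) {l r : List ℕ} (hl : LeftPrefix α k l)
    (hr : RightPrefix α k r) : scanRight l (α k) r = true := by
  have key : (α k != 2 || !lowerGE 41 32 l r) = true := by
    by_cases hk : α k = 2
    · simp [h.not_lowerGE hk hl hr]
    · simp [hk]
  induction r generalizing k l with
  | nil => exact key
  | cons a r ih =>
    obtain ⟨h1, h2, h3⟩ := hr.move_right hl
    have := ih h1 h3 <| by
      by_cases hk : α (k + 1) = 2
      · simp [h.not_lowerGE hk h1 h3]
      · simp [hk]
    rw [h2] at this
    simp only [scanRight, key, this, Bool.and_self]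

/-- The windows `(l, 2, r)` of radius `n` in which no position has too large a value, and the
centre may have a value above the left end of the gap. -/
def windows : ℕ → List (List ℕ × List ℕ)
  | 0 => [([], [])]
  | n + 1 => ((windows n).flatMap fun p => [(p.1 ++ [1], p.2 ++ [1]), (p.1 ++ [1], p.2 ++ [2]),
      (p.1 ++ [2], p.2 ++ [1]), (p.1 ++ [2], p.2 ++ [2])]).filter fun p =>
        !upperLE 126598 100000 p.1 p.2 && scanRight p.1 2 p.2 && scanRight p.2 2 p.1

/-- The value at `k` exceeds a rational number slightly below the left end of the gap. -/
def IsLarge (α : ℤ → ℕ) (k : ℤ) : Prop :=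
  (2 : ℝ) + (126598 : ℕ) / (100000 : ℕ) < lambdaVal α k

lemma IsLarge.reflect (hα : IsOneTwo α) (h : IsLarge α k) : IsLarge (fun n => α (-n)) (-k) := by
  rwa [IsLarge, lambdaVal_neg hα.pos]

lemma IsLarge.eq_two (hα : IsOneTwo α) (h : IsLarge α k) : α k = 2 := by
  refine (hα k).resolve_left fun hk => ?_
  have h1 := (hα.rightVal_mem_Icc k).2
  have h2 := (hα.leftVal_mem_Icc k).2
  rw [IsLarge, lambdaVal_eq hα.pos, hk] at h
  norm_num at h
  linarith

lemma Admissible.exists_mem_windows (h : Admissible α) (hk : IsLarge α k) (n : ℕ) :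
    ∃ p ∈ windows n, LeftPrefix α k p.1 ∧ RightPrefix α k p.2 := by
  have hk2 := hk.eq_two h.isOneTwo
  induction n with
  | zero => exact ⟨([], []), by simp [windows], trivial, trivial⟩
  | succ n ih =>
    obtain ⟨⟨l, r⟩, hp, hl, hr⟩ := ih
    obtain ⟨a, ha, hl⟩ := h.isOneTwo.exists_leftPrefix_append hl
    obtain ⟨b, hb, hr⟩ := h.isOneTwo.exists_rightPrefix_append hr
    refine ⟨(l ++ [a], r ++ [b]), ?_, hl, hr⟩
    rw [windows, List.mem_filter, List.mem_flatMap]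
    refine ⟨⟨_, hp, ?_⟩, ?_⟩
    · rcases ha with rfl | rfl <;> rcases hb with rfl | rfl <;> simp
    · have h1 := h.scanRight_eq_true hl hr
      have h2 := h.reflect.scanRight_eq_true (k := -k) ((rightPrefix_iff _).1 hr)
        ((leftPrefix_iff _).1 hl)
      rw [neg_neg, hk2] at h2
      rw [hk2] at h1
      have h3 : upperLE 126598 100000 (l ++ [a]) (r ++ [b]) = false := by
        by_contra H
        have h4 := h.isOneTwo.lambdaVal_le hl hr (by norm_num) (Bool.eq_true_of_not_eq_false H)
        rw [hk2] at h4
        exact absurd h4 (not_le.2 hk)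
      simp [h1, h2, h3]

lemma windows_ten : windows 10 =
    [([1, 1, 1, 2, 1, 1, 1, 2, 1, 1], [1, 1, 1, 2, 1, 1, 1, 2, 1, 1]),
      ([1, 1, 2, 1, 2, 2, 1, 2, 1, 1], [1, 2, 2, 1, 2, 1, 1, 2, 1, 2]),
      ([1, 1, 2, 1, 2, 2, 1, 2, 2, 2], [1, 2, 2, 1, 2, 2, 2, 1, 2, 2]),
      ([1, 2, 2, 1, 2, 1, 1, 2, 1, 2], [1, 1, 2, 1, 2, 2, 1, 2, 1, 1]),
      ([1, 2, 2, 1, 2, 2, 2, 1, 2, 2], [1, 1, 2, 1, 2, 2, 1, 2, 2, 2])] := by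
  decide +kernel

lemma Admissible.window_cases (h : Admissible α) (hk : IsLarge α k) :
    (LeftPrefix α k [1, 1, 1, 2, 1, 1, 1, 2, 1, 1] ∧
        RightPrefix α k [1, 1, 1, 2, 1, 1, 1, 2, 1, 1]) ∨
      (LeftPrefix α k [1, 1, 2, 1, 2, 2, 1, 2, 1, 1] ∧
        RightPrefix α k [1, 2, 2, 1, 2, 1, 1, 2, 1, 2]) ∨
      (LeftPrefix α k [1, 1, 2, 1, 2, 2, 1, 2, 2, 2] ∧
        RightPrefix α k [1, 2, 2, 1, 2, 2, 2, 1, 2, 2]) ∨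
      (LeftPrefix α k [1, 2, 2, 1, 2, 1, 1, 2, 1, 2] ∧
        RightPrefix α k [1, 1, 2, 1, 2, 2, 1, 2, 1, 1]) ∨
      (LeftPrefix α k [1, 2, 2, 1, 2, 2, 2, 1, 2, 2] ∧
        RightPrefix α k [1, 1, 2, 1, 2, 2, 1, 2, 2, 2]) := by
  obtain ⟨p, hp, hl, hr⟩ := h.exists_mem_windows hk 10
  rw [windows_ten] at hp
  simp only [List.mem_cons, List.not_mem_nil, or_false] at hp
  rcases hp with rfl | rfl | rfl | rfl | rfl <;> simp only [hl, hr, and_self, true_or, or_true]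

lemma IsOneTwo.isLarge (h : IsOneTwo α) (hk : α k = 2) {l r : List ℕ} (hl : LeftPrefix α k l)
    (hr : RightPrefix α k r) (H : lowerGE 12660 10000 l r) : IsLarge α k := by
  have := h.le_lambdaVal hl hr (by norm_num) H
  rw [hk] at this
  rw [IsLarge]
  norm_num at this ⊢
  linarith

lemma isLarge_of_lt (hk : 4 * Real.sqrt 6 / 3 < lambdaVal α k) : IsLarge α k :=
  lt_gapLeft.trans hk

lemma nonpos_of_two_pow_mul_le {d : ℝ} (h : ∀ n : ℕ, 2 ^ n * d ≤ 1) : d ≤ 0 := by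
  by_contra! hd
  obtain ⟨n, hn⟩ := pow_unbounded_of_one_lt (1 / d) (by norm_num : (1 : ℝ) < 2)
  rw [div_lt_iff₀ hd] at hn
  linarith [h n]

/-! ### The period `1112` -/

lemma Admissible.two_pow_mul_right_le (h : Admissible α) (n : ℕ) (k : ℤ)
    (hk : 4 * Real.sqrt 6 / 3 < lambdaVal α k)
    (hl : LeftPrefix α k [1, 1, 1, 2]) (hr : RightPrefix α k [1, 1, 1, 2])
    (hpos : 2 * Real.sqrt 6 / 3 - 1 < rightVal α k) :
    2 ^ n * (rightVal α k - (2 * Real.sqrt 6 / 3 - 1)) ≤ 1 := by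
  have hs := Real.sq_sqrt (show (0 : ℝ) ≤ 6 by norm_num)
  have hs0 : 2.449 < Real.sqrt 6 := by
    rw [Real.lt_sqrt (by norm_num)]; norm_num
  induction n generalizing k with
  | zero =>
    have := (h.isOneTwo.rightVal_mem_Icc k).2
    linarith
  | succ n ih =>
    have h2 := (isLarge_of_lt hk).eq_two h.isOneTwo
    have hp := h.isOneTwo.pos
    have e := lambdaVal_eq (k := k) hp
    obtain ⟨a1, a2, a3, a4, -⟩ := hr
    rw [h2, Nat.cast_ofNat] at e
    have x1 := rightVal_rec (k := k) hp
    have x2 := rightVal_rec (k := k + 1) hp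
    have x3 := rightVal_rec (k := k + 1 + 1) hp
    have x4 := rightVal_rec (k := k + 1 + 1 + 1) hp
    have y1 := leftVal_rec (k := k + 1) hp
    have y2 := leftVal_rec (k := k + 1 + 1) hp
    have y3 := leftVal_rec (k := k + 1 + 1 + 1) hp
    have y4 := leftVal_rec (k := k + 1 + 1 + 1 + 1) hp
    simp only [add_sub_cancel_right] at y1 y2 y3 y4
    have e' := lambdaVal_eq (k := k + 1 + 1 + 1 + 1) hp
    rw [a4] at e'
    have xp := rightVal_pos (k := k + 1 + 1 + 1 + 1) hp
    have yp := leftVal_pos (k := k) hp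
    set x := rightVal α (k + 1 + 1 + 1 + 1)
    set y := leftVal α k
    have hx : rightVal α k = (2 * x + 5) / (3 * x + 8) := by
      rw [x1, x2, x3, x4, a1, a2, a3, a4]
      push_cast
      field_simp
      ring
    have hy : leftVal α (k + 1 + 1 + 1 + 1) = (2 * y + 5) / (3 * y + 8) := by
      rw [y4, y3, y2, y1, a1, a2, a3, h2]
      push_cast
      field_simp
      ring
    set ρ := 2 * Real.sqrt 6 / 3 - 1 with hρ
    have hρ0 : 0 < ρ := by rw [hρ]; linarith
    have hρ2 : ρ * (3 * ρ + 8) = 2 * ρ + 5 := by rw [hρ]; nlinarith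
    have hL : 4 * Real.sqrt 6 / 3 = 2 + 2 * ρ := by rw [hρ]; ring
    have dx : x - ρ = (rightVal α k - ρ) * ((3 * x + 8) * (3 * ρ + 8)) := by
      rw [hx]; field_simp; linear_combination (3 * x + 8) * hρ2
    have dy : y - ρ = (leftVal α (k + 1 + 1 + 1 + 1) - ρ) * ((3 * y + 8) * (3 * ρ + 8)) := by
      rw [hy]; field_simp; linear_combination (3 * y + 8) * hρ2
    have hx2 : 2 * (rightVal α k - ρ) ≤ x - ρ := by
      rw [dx, mul_comm]
      exact mul_le_mul_of_nonneg_left (by nlinarith [mul_pos xp hρ0]) (by linarith)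
    have hm : 1 ≤ (3 * y + 8) * (3 * ρ + 8) := by nlinarith [mul_pos yp hρ0]
    have hy2 : -(rightVal α k - ρ) < leftVal α (k + 1 + 1 + 1 + 1) - ρ := by
      have : -(rightVal α k - ρ) < y - ρ := by linarith
      by_cases hc : 0 ≤ leftVal α (k + 1 + 1 + 1 + 1) - ρ
      · linarith
      · have := mul_le_mul_of_nonpos_left hm (not_le.1 hc).le
        linarith
    have hlam : 4 * Real.sqrt 6 / 3 < lambdaVal α (k + 1 + 1 + 1 + 1) := by
      rw [e', hL]; push_cast; linarith
    have hw : LeftPrefix α (k + 1 + 1 + 1 + 1) [1, 1, 1, 2] := by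
      simp [LeftPrefix, a1, a2, a3, h2]
    have hr' : RightPrefix α (k + 1 + 1 + 1 + 1) [1, 1, 1, 2] := by
      clear_value x y ρ
      clear x1 x2 x3 x4 y1 y2 y3 y4 hx hy dx dy hx2 hm hy2 e e' ih
      rcases h.window_cases (isLarge_of_lt hlam) with c | c | c | c | c <;>
        simp_all [LeftPrefix, RightPrefix]
    have := ih _ hlam hw hr' (by linarith)
    calc 2 ^ (n + 1) * (rightVal α k - ρ) = 2 ^ n * (2 * (rightVal α k - ρ)) := by ring
      _ ≤ 2 ^ n * (x - ρ) := by gcongr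
      _ ≤ 1 := this

lemma Admissible.lambdaVal_le_of_1112 (h : Admissible α)
    (hl : LeftPrefix α k [1, 1, 1, 2]) (hr : RightPrefix α k [1, 1, 1, 2]) :
    lambdaVal α k ≤ 4 * Real.sqrt 6 / 3 := by
  by_contra! hk
  have h2 := (isLarge_of_lt hk).eq_two h.isOneTwo
  have e := lambdaVal_eq (k := k) h.isOneTwo.pos
  rw [h2] at e
  push_cast at e
  by_cases hc : 2 * Real.sqrt 6 / 3 - 1 < rightVal α k
  · have := nonpos_of_two_pow_mul_le fun n => h.two_pow_mul_right_le n k hk hl hr hc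
    linarith
  · have hc' : 2 * Real.sqrt 6 / 3 - 1 < leftVal α k := by linarith
    have := nonpos_of_two_pow_mul_le fun n => h.reflect.two_pow_mul_right_le n (-k)
      (by rwa [lambdaVal_neg h.isOneTwo.pos]) ((rightPrefix_iff _).1 hr)
      ((leftPrefix_iff _).1 hl) hc'
    rw [leftVal] at hc'
    linarith

/-! ### The tails `2221` -/

lemma Admissible.two_pow_mul_tail_le (h : Admissible α) (n : ℕ) (k : ℤ)
    (hl : LeftPrefix α (k + 1) [1, 2, 2, 2]) :
    2 ^ n * ((Real.sqrt 30 - 3) / 6 - rightVal α k) ≤ 1 := by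
  have hs := Real.sq_sqrt (show (0 : ℝ) ≤ 30 by norm_num)
  have hs0 : 5.47 < Real.sqrt 30 := by
    rw [Real.lt_sqrt (by norm_num)]; norm_num
  have hs1 : Real.sqrt 30 < 5.48 := by
    rw [Real.sqrt_lt' (by norm_num)]; norm_num
  have hp := h.isOneTwo.pos
  induction n generalizing k with
  | zero =>
    have := rightVal_pos (k := k) hp
    linarith
  | succ n ih =>
    set η := (Real.sqrt 30 - 3) / 6 with hη
    have hη0 : 0 < η := by rw [hη]; linarith
    have hη1 : η < 0.4134 := by rw [hη]; linarith
    have hη2 : η * (12 * η + 17) = 5 * η + 7 := by rw [hη]; nlinarith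
    by_cases hneg : η ≤ rightVal α k
    · have : 2 ^ (n + 1) * (η - rightVal α k) ≤ 0 :=
        mul_nonpos_of_nonneg_of_nonpos (by positivity) (by linarith)
      linarith
    push Not at hneg
    have x1 := rightVal_rec (k := k) hp
    have x2 := rightVal_rec (k := k + 1) hp
    have x3 := rightVal_rec (k := k + 1 + 1) hp
    have x4 := rightVal_rec (k := k + 1 + 1 + 1) hp
    have p1 := rightVal_pos (k := k + 1) hp
    have p3 := rightVal_pos (k := k + 1 + 1 + 1) hp
    have u1 := (h.isOneTwo.rightVal_mem_Icc (k + 1)).2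
    have u3 := (h.isOneTwo.rightVal_mem_Icc (k + 1 + 1 + 1)).2
    have xp := rightVal_pos (k := k + 1 + 1 + 1 + 1) hp
    have a1 : α (k + 1) = 2 := by
      refine (h.isOneTwo _).resolve_left fun a1 => ?_
      rw [x1, a1, div_lt_iff₀ (by positivity)] at hneg
      push_cast at hneg
      nlinarith
    have a2 : α (k + 1 + 1) = 2 := by
      refine (h.isOneTwo _).resolve_left fun a2 => ?_
      have := h.not_lowerGE (k := k + 1) a1 hl (r := [1]) ⟨a2, trivial⟩
      revert this
      decide
    have a3 : α (k + 1 + 1 + 1) = 2 := by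
      refine (h.isOneTwo _).resolve_left fun a3 => ?_
      rw [x1, x2, x3, a1, a2, a3] at hneg
      push_cast at hneg
      field_simp at hneg
      nlinarith
    have a4 : α (k + 1 + 1 + 1 + 1) = 1 := by
      refine (h.isOneTwo _).resolve_right fun a4 => ?_
      rw [x1, x2, x3, x4, a1, a2, a3, a4] at hneg
      push_cast at hneg
      field_simp at hneg
      nlinarith
    have hw : LeftPrefix α (k + 1 + 1 + 1 + 1 + 1) [1, 2, 2, 2] := by
      simp [LeftPrefix, a1, a2, a3, a4]
    have := ih _ hw
    set x := rightVal α (k + 1 + 1 + 1 + 1)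
    have hx : rightVal α k = (5 * x + 7) / (12 * x + 17) := by
      rw [x1, x2, x3, x4, a1, a2, a3, a4]
      push_cast
      field_simp
      ring
    have dx : η - x = (η - rightVal α k) * ((12 * x + 17) * (12 * η + 17)) := by
      rw [hx]; field_simp; linear_combination -(12 * x + 17) * hη2
    have hx2 : 2 * (η - rightVal α k) ≤ η - x := by
      rw [dx, mul_comm]
      exact mul_le_mul_of_nonneg_left (by nlinarith [mul_pos xp hη0]) (by linarith)
    calc 2 ^ (n + 1) * (η - rightVal α k) = 2 ^ n * (2 * (η - rightVal α k)) := by ring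
      _ ≤ 2 ^ n * (η - x) := by gcongr
      _ ≤ 1 := this

lemma Admissible.le_rightVal_of_2221 (h : Admissible α) (hr : RightPrefix α k [2, 2, 2, 1]) :
    (Real.sqrt 30 - 3) / 6 ≤ rightVal α k := by
  have hs := Real.sq_sqrt (show (0 : ℝ) ≤ 30 by norm_num)
  have hs0 : 5.47 < Real.sqrt 30 := by
    rw [Real.lt_sqrt (by norm_num)]; norm_num
  have hp := h.isOneTwo.pos
  obtain ⟨a1, a2, a3, a4, -⟩ := hr
  have hw : LeftPrefix α (k + 1 + 1 + 1 + 1 + 1) [1, 2, 2, 2] := by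
    simp [LeftPrefix, a1, a2, a3, a4]
  have hx := nonpos_of_two_pow_mul_le fun n => h.two_pow_mul_tail_le n _ hw
  have xp := rightVal_pos (k := k + 1 + 1 + 1 + 1) hp
  rw [rightVal_rec hp, rightVal_rec (k := k + 1) hp, rightVal_rec (k := k + 1 + 1) hp,
    rightVal_rec (k := k + 1 + 1 + 1) hp, a1, a2, a3, a4]
  set x := rightVal α (k + 1 + 1 + 1 + 1)
  set η := (Real.sqrt 30 - 3) / 6 with hη
  have hη0 : 0 < η := by rw [hη]; linarith
  have hη2 : η * (12 * η + 17) = 5 * η + 7 := by rw [hη]; nlinarith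
  have : (1 / ((2 : ℕ) + 1 / ((2 : ℕ) + 1 / ((2 : ℕ) + 1 / ((1 : ℕ) + x)))) : ℝ)
      = (5 * x + 7) / (12 * x + 17) := by
    push_cast
    field_simp
    ring
  rw [this, le_div_iff₀ (by positivity)]
  nlinarith

/-! ### The palindrome `122121121221` -/

lemma IsOneTwo.rightVal_of_1221 (h : IsOneTwo α) (hr : RightPrefix α k [1, 2, 2, 1]) :
    rightVal α k = (5 * rightVal α (k + 4) + 7) / (7 * rightVal α (k + 4) + 10) := by
  have hp := h.pos
  obtain ⟨a1, a2, a3, a4, -⟩ := hr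
  have xp := rightVal_pos (k := k + 4) hp
  rw [rightVal_rec hp, rightVal_rec (k := k + 1) hp, rightVal_rec (k := k + 1 + 1) hp,
    rightVal_rec (k := k + 1 + 1 + 1) hp, a1, a2, a3, a4, show k + 1 + 1 + 1 + 1 = k + 4 by ring]
  push_cast
  field_simp
  ring

lemma IsOneTwo.rightVal_of_1121221 (h : IsOneTwo α) (hr : RightPrefix α k [1, 1, 2, 1, 2, 2, 1]) :
    rightVal α k = (26 * rightVal α (k + 7) + 37) / (45 * rightVal α (k + 7) + 64) := by
  have hp := h.pos
  have xp := rightVal_pos (k := k + 7) hp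
  obtain ⟨a1, a2, a3, hr⟩ := hr
  have h4 := h.rightVal_of_1221 hr
  rw [rightVal_rec hp, rightVal_rec (k := k + 1) hp, rightVal_rec (k := k + 1 + 1) hp, h4,
    a1, a2, a3, show k + 1 + 1 + 1 + 4 = k + 7 by ring]
  push_cast
  field_simp
  ring

lemma IsOneTwo.leftVal_of_1221 (h : IsOneTwo α) (hl : LeftPrefix α k [1, 2, 2, 1]) :
    leftVal α k = (5 * leftVal α (k - 4) + 7) / (7 * leftVal α (k - 4) + 10) := by
  have := h.reflect.rightVal_of_1221 ((leftPrefix_iff _).1 hl)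
  rwa [show -k + 4 = -(k - 4) by ring] at this

lemma IsOneTwo.leftVal_of_1121221 (h : IsOneTwo α) (hl : LeftPrefix α k [1, 1, 2, 1, 2, 2, 1]) :
    leftVal α k = (26 * leftVal α (k - 7) + 37) / (45 * leftVal α (k - 7) + 64) := by
  have := h.reflect.rightVal_of_1121221 ((leftPrefix_iff _).1 hl)
  rwa [show -k + 7 = -(k - 7) by ring] at this

lemma gapRight_eq : (18879 + 800 * Real.sqrt 30) / 7089 =
    2 + (5 * ((Real.sqrt 30 - 3) / 6) + 7) / (7 * ((Real.sqrt 30 - 3) / 6) + 10) +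
      (26 * ((Real.sqrt 30 - 3) / 6) + 37) / (45 * ((Real.sqrt 30 - 3) / 6) + 64) := by
  have hs := Real.sq_sqrt (show (0 : ℝ) ≤ 30 by norm_num)
  have hs0 : 0 ≤ Real.sqrt 30 := Real.sqrt_nonneg _
  generalize Real.sqrt 30 = s at *
  have e1 : (5 * ((s - 3) / 6) + 7) / (7 * ((s - 3) / 6) + 10) = (1 + 2 * s) / 17 := by
    rw [div_eq_div_iff (by linarith) (by norm_num)]
    linear_combination (-7 / 3) * hs
  have e2 : (26 * ((s - 3) / 6) + 37) / (45 * ((s - 3) / 6) + 64) = (252 - 2 * s) / 417 := by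
    rw [div_eq_div_iff (by linarith) (by norm_num)]
    linear_combination 15 * hs
  rw [e1, e2]
  ring

lemma gapRight_le {η x y : ℝ} (hη : 0 < η) (hy : η ≤ y) (hx : y ≤ x) :
    2 + (5 * η + 7) / (7 * η + 10) + (26 * η + 37) / (45 * η + 64) ≤
      2 + (5 * x + 7) / (7 * x + 10) + (26 * y + 37) / (45 * y + 64) := by
  have hy0 : 0 < y := by linarith
  have hx0 : 0 < x := by linarith
  have e1 : (5 * x + 7) / (7 * x + 10) - (5 * η + 7) / (7 * η + 10) =
      (x - η) / ((7 * x + 10) * (7 * η + 10)) := by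
    field_simp
    ring
  have e2 : (26 * η + 37) / (45 * η + 64) - (26 * y + 37) / (45 * y + 64) =
      (y - η) / ((45 * y + 64) * (45 * η + 64)) := by
    field_simp
    ring
  have e3 : (y - η) / ((45 * y + 64) * (45 * η + 64)) ≤
      (y - η) / ((7 * y + 10) * (7 * η + 10)) := by
    gcongr <;> linarith
  have e4 : (y - η) / ((7 * y + 10) * (7 * η + 10)) ≤ (x - η) / ((7 * x + 10) * (7 * η + 10)) := by
    rw [div_le_div_iff₀ (by positivity) (by positivity)]
    have : (y - η) * (7 * x + 10) ≤ (x - η) * (7 * y + 10) := by nlinarith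
    nlinarith
  linarith

lemma Admissible.false_of_palindrome (h : Admissible α) (hk : IsLarge α k)
    (hl : LeftPrefix α k [1, 1, 2, 1, 2, 2, 1, 2, 2, 2])
    (hr : RightPrefix α k [1, 2, 2, 1, 2, 2, 2, 1, 2, 2]) : False := by
  have hp := h.isOneTwo.pos
  have h2 := hk.eq_two h.isOneTwo
  have h3 : α (k - 3) = 2 := by grind (ematch := 40) (gen := 40) [LeftPrefix]
  have hl3 : LeftPrefix α (k - 3) [1, 2, 2, 1, 2, 2, 2] := by
    grind (ematch := 40) (gen := 40) [LeftPrefix]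
  have hr3 : RightPrefix α (k - 3) [1, 1, 2, 1, 2, 2, 1] := by
    grind (ematch := 40) (gen := 40) [LeftPrefix, RightPrefix]
  have hk3 := h.isOneTwo.isLarge h3 hl3 hr3 (by decide)
  have hx := h.le_rightVal_of_2221 (k := k + 4) (by grind (ematch := 40) (gen := 40) [RightPrefix])
  have hy := h.reflect.le_rightVal_of_2221 (k := -(k - 7)) <| (leftPrefix_iff _).1 <| by
    rcases h.window_cases hk3 with c | c | c | c | c <;> grind (ematch := 40) (gen := 40) [LeftPrefix]
  rw [← leftVal] at hy
  have hη : 0 < (Real.sqrt 30 - 3) / 6 := by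
    have : 3 < Real.sqrt 30 := by rw [Real.lt_sqrt (by norm_num)]; norm_num
    linarith
  have e := h.lambdaVal_lt k
  have e3 := h.lambdaVal_lt (k - 3)
  rw [gapRight_eq, lambdaVal_eq hp] at e e3
  rw [h.isOneTwo.rightVal_of_1221 (by grind (ematch := 40) (gen := 40) [RightPrefix]),
    h.isOneTwo.leftVal_of_1121221 (by grind (ematch := 40) (gen := 40) [LeftPrefix]), h2] at e
  rw [h.isOneTwo.rightVal_of_1121221 (by grind (ematch := 40) (gen := 40) [RightPrefix]),
    h.isOneTwo.leftVal_of_1221 (by grind (ematch := 40) (gen := 40) [LeftPrefix]), h3,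
    show k - 3 - 4 = k - 7 by ring, show k - 3 + 7 = k + 4 by ring] at e3
  push_cast at e e3
  rcases le_total (leftVal α (k - 7)) (rightVal α (k + 4)) with hxy | hxy
  · linarith [gapRight_le hη hy hxy]
  · linarith [gapRight_le hη hx hxy]

/-! ### The period `11212212` -/

/-- Position `k` is the right one of the two large positions in a period `11212212`. -/
def IsPeriodicAt (α : ℤ → ℕ) (k : ℤ) : Prop :=
  α k = 2 ∧ LeftPrefix α k [1, 1, 2, 1, 2, 2, 1, 2, 1, 1] ∧
    RightPrefix α k [1, 2, 2, 1, 2, 1, 1, 2, 1, 2]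

lemma Admissible.isPeriodicAt_add_eight (h : Admissible α) (hk : IsPeriodicAt α k) :
    IsPeriodicAt α (k + 8) := by
  obtain ⟨h2, hl, hr⟩ := hk
  have h5 : α (k + 5) = 2 := by grind (ematch := 40) (gen := 40) [RightPrefix]
  have hl5 : LeftPrefix α (k + 5) [1, 2, 2, 1, 2, 1, 1] := by
    grind (ematch := 40) (gen := 40) [LeftPrefix, RightPrefix]
  have hr5 : RightPrefix α (k + 5) [1, 1, 2, 1, 2] := by
    grind (ematch := 40) (gen := 40) [RightPrefix]
  have hc5 := h.window_cases (h.isOneTwo.isLarge h5 hl5 hr5 (by decide))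
  have hr5' : RightPrefix α (k + 5) [1, 1, 2, 1, 2, 2, 1, 2, 1, 1] := by
    rcases hc5 with c | c | c | c | c <;> grind (ematch := 40) (gen := 40) [LeftPrefix]
  have h8 : α (k + 8) = 2 := by grind (ematch := 40) (gen := 40) [RightPrefix]
  have hl8 : LeftPrefix α (k + 8) [1, 1, 2, 1, 2, 2, 1] := by
    grind (ematch := 40) (gen := 40) [LeftPrefix, RightPrefix]
  have hr8 : RightPrefix α (k + 8) [1, 2, 2, 1, 2, 1] := by
    grind (ematch := 40) (gen := 40) [RightPrefix]
  refine ⟨h8, ?_⟩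
  rcases h.window_cases (h.isOneTwo.isLarge h8 hl8 hr8 (by decide)) with c | c | c | c | c <;>
    grind (ematch := 40) (gen := 40) [LeftPrefix, RightPrefix]

lemma Admissible.isPeriodicAt_sub_eight (h : Admissible α) (hk : IsPeriodicAt α k) :
    IsPeriodicAt α (k - 8) := by
  obtain ⟨h2, hl, hr⟩ := hk
  have h5 : α (k - 3) = 2 := by grind (ematch := 40) (gen := 40) [LeftPrefix]
  have hr5 : RightPrefix α (k - 3) [1, 1, 2, 1, 2, 2, 1] := by
    grind (ematch := 40) (gen := 40) [LeftPrefix, RightPrefix]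
  have hl5 : LeftPrefix α (k - 3) [1, 2, 2, 1, 2, 1, 1] := by
    grind (ematch := 40) (gen := 40) [LeftPrefix]
  have hc5 := h.window_cases (h.isOneTwo.isLarge h5 hl5 hr5 (by decide))
  have hl5' : LeftPrefix α (k - 3) [1, 2, 2, 1, 2, 1, 1, 2, 1, 2] := by
    rcases hc5 with c | c | c | c | c <;> grind (ematch := 40) (gen := 40) [LeftPrefix]
  have h8 : α (k - 8) = 2 := by grind (ematch := 40) (gen := 40) [LeftPrefix]
  have hr8 : RightPrefix α (k - 8) [1, 2, 2, 1, 2, 1] := by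
    grind (ematch := 40) (gen := 40) [LeftPrefix, RightPrefix]
  have hl8 : LeftPrefix α (k - 8) [1, 1, 2, 1, 2] := by
    grind (ematch := 40) (gen := 40) [LeftPrefix]
  refine ⟨h8, ?_⟩
  rcases h.window_cases (h.isOneTwo.isLarge h8 hl8 hr8 (by decide)) with c | c | c | c | c <;>
    grind (ematch := 40) (gen := 40) [LeftPrefix, RightPrefix]

lemma Admissible.isPeriodicAt_add_mul (h : Admissible α) (hk : IsPeriodicAt α k) (j : ℤ) :
    IsPeriodicAt α (k + 8 * j) := by
  induction j using Int.induction_on with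
  | zero => simpa using hk
  | succ i ih => rw [mul_add, ← add_assoc]; exact h.isPeriodicAt_add_eight ih
  | pred i ih => rw [mul_sub, ← add_sub_assoc]; exact h.isPeriodicAt_sub_eight ih

/-- The sequence of period `11212212`. -/
def periodicSeq (n : ℤ) : ℕ :=
  if n % 8 = 0 ∨ n % 8 = 2 ∨ n % 8 = 3 ∨ n % 8 = 5 then 2 else 1

lemma Admissible.eq_periodicSeq (h : Admissible α) (hk : IsPeriodicAt α k) (n : ℤ) :
    α (k + n) = periodicSeq n := by
  obtain ⟨h2, -, hr⟩ := h.isPeriodicAt_add_mul hk (n / 8)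
  have hn := Int.emod_add_mul_ediv n 8
  have h0 := Int.emod_nonneg n (show (8 : ℤ) ≠ 0 by norm_num)
  have h8 := Int.emod_lt_of_pos n (show (0 : ℤ) < 8 by norm_num)
  simp only [RightPrefix] at hr
  obtain ⟨a1, a2, a3, a4, a5, a6, a7, -⟩ := hr
  rw [show k + n = k + 8 * (n / 8) + n % 8 by linarith, periodicSeq]
  generalize n % 8 = r at *
  interval_cases r <;> simp_all [add_assoc]

end

section

variable {α : ℤ → ℕ} {k : ℤ} {x : ℝ}

lemma mem_markovSpectrum_of_isGreatest (hα : ∀ n, 0 < α n)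
    (h : IsGreatest (range (lambdaVal α)) x) : x ∈ markovSpectrum :=
  ⟨α, hα, h.bddAbove, h.csSup_eq⟩

lemma range_lambdaVal_reflect (hα : ∀ n, 0 < α n) :
    range (lambdaVal fun n => α (-n)) = range (lambdaVal α) := by
  rw [← (Equiv.neg ℤ).surjective.range_comp (lambdaVal fun n => α (-n))]
  congr 1
  funext k
  exact lambdaVal_neg hα

lemma IsOneTwo.lambdaVal_le_of_small (h : IsOneTwo α)
    (hk : α k = 1 ∨ α (k + 1) = 2 ∨ α (k - 1) = 2) : lambdaVal α k ≤ 97 / 30 := by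
  have hr := (h.rightVal_mem_Icc k).2
  have hl := (h.leftVal_mem_Icc k).2
  have h2 : (α k : ℝ) ≤ 2 := by rcases h k with e | e <;> norm_num [e]
  have half {y : ℝ} (hy : 0 < y) : 1 / ((2 : ℕ) + y) ≤ 1 / 2 :=
    one_div_le_one_div_of_le (by norm_num) (by push_cast; linarith)
  rw [lambdaVal_eq h.pos]
  rcases hk with e | e | e
  · rw [e]
    push_cast
    linarith
  · have := half (rightVal_pos (k := k + 1) h.pos)
    rw [← e, ← rightVal_rec h.pos] at this
    linarith
  · have := half (leftVal_pos (k := k - 1) h.pos)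
    rw [← e, ← leftVal_rec h.pos] at this
    linarith

/-- A sequence of positive integers whose Markov value is below the gap has digits `1` and `2`. -/
lemma isOneTwo_of_lambdaVal_lt (hα : ∀ n, 0 < α n)
    (h : ∀ k, lambdaVal α k < (18879 + 800 * Real.sqrt 30) / 7089) : IsOneTwo α := by
  have hlt k : α k + rightVal α k + leftVal α k < 105 / 32 := by
    rw [← lambdaVal_eq hα]
    exact (h k).trans gapRight_lt
  have hr k : 0 < rightVal α k := rightVal_pos hα
  have hl k : 0 < leftVal α k := leftVal_pos hα
  have h3 k : (α k : ℝ) ≤ 3 := by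
    have : (α k : ℝ) < (4 : ℕ) := by push_cast; linarith [hlt k, hr k, hl k]
    exact_mod_cast Nat.lt_succ_iff.1 (Nat.cast_lt.1 this)
  have h1 k : (1 : ℝ) ≤ α k := by exact_mod_cast hα k
  have hr1 k : rightVal α k ≤ 1 := by
    rw [rightVal_rec hα, div_le_one (by linarith [h1 (k + 1), hr (k + 1)])]
    linarith [h1 (k + 1), hr (k + 1)]
  have hl1 k : leftVal α k ≤ 1 := by
    rw [leftVal_rec hα, div_le_one (by linarith [h1 (k - 1), hl (k - 1)])]
    linarith [h1 (k - 1), hl (k - 1)]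
  have hr4 k : 1 / 4 ≤ rightVal α k := by
    rw [rightVal_rec hα]
    exact one_div_le_one_div_of_le (by linarith [h1 (k + 1), hr (k + 1)])
      (by linarith [h3 (k + 1), hr1 (k + 1)])
  have hl4 k : 1 / 4 ≤ leftVal α k := by
    rw [leftVal_rec hα]
    exact one_div_le_one_div_of_le (by linarith [h1 (k - 1), hl (k - 1)])
      (by linarith [h3 (k - 1), hl1 (k - 1)])
  intro k
  have h2 : (α k : ℝ) < (3 : ℕ) := by push_cast; linarith [hlt k, hr4 k, hl4 k]
  have := Nat.cast_lt.1 h2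
  have := hα k
  omega

/-! ### The isolated point -/

lemma periodicSeq_isOneTwo : IsOneTwo periodicSeq := fun n => by
  unfold periodicSeq
  split <;> simp

lemma rightVal_periodicSeq_zero : rightVal periodicSeq 0 = (Real.sqrt 689 - 15) / 16 := by
  have hp := periodicSeq_isOneTwo.pos
  have e : rightVal periodicSeq 8 = rightVal periodicSeq 0 :=
    rightVal_congr fun n => by unfold periodicSeq; congr 1; grind
  have xp := rightVal_pos (k := 0) hp
  have h1 := periodicSeq_isOneTwo.rightVal_of_1221 (k := 0) (by simp [RightPrefix, periodicSeq])
  have h4 := rightVal_rec (k := 4) hp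
  have h5 := rightVal_rec (k := 5) hp
  have h6 := rightVal_rec (k := 6) hp
  have h7 := rightVal_rec (k := 7) hp
  norm_num [periodicSeq] at h1 h4 h5 h6 h7
  rw [h4, h5, h6, h7, e] at h1
  generalize rightVal periodicSeq 0 = x at *
  have hs : Real.sqrt 689 = 16 * x + 15 := by
    rw [Real.sqrt_eq_iff_mul_self_eq (by norm_num) (by linarith)]
    field_simp at h1
    nlinarith
  rw [hs]
  ring

lemma leftVal_periodicSeq_zero : leftVal periodicSeq 0 = (Real.sqrt 689 - 17) / 16 := by
  have hp := periodicSeq_isOneTwo.pos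
  have e : leftVal periodicSeq (-8) = leftVal periodicSeq 0 :=
    rightVal_congr fun n => by unfold periodicSeq; congr 1; grind
  have xp := leftVal_pos (k := 0) hp
  have h1 := periodicSeq_isOneTwo.leftVal_of_1121221 (k := 0) (by simp [LeftPrefix, periodicSeq])
  have h7 := leftVal_rec (k := -7) hp
  norm_num [periodicSeq] at h1 h7
  rw [h7, e] at h1
  generalize leftVal periodicSeq 0 = x at *
  have hs : Real.sqrt 689 = 16 * x + 17 := by
    rw [Real.sqrt_eq_iff_mul_self_eq (by norm_num) (by linarith)]
    field_simp at h1
    nlinarith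
  rw [hs]
  ring

lemma lambdaVal_congr {β : ℤ → ℕ} (hα : ∀ n, 0 < α n) (hβ : ∀ n, 0 < β n) {j : ℤ}
    (h : ∀ n, α (k + n) = β (j + n)) : lambdaVal α k = lambdaVal β j := by
  have h0 : α k = β j := by simpa using h 0
  have hr : rightVal α k = rightVal β j :=
    rightVal_congr fun n => by simpa [add_assoc] using h (1 + n)
  have hl : leftVal α k = leftVal β j :=
    rightVal_congr fun n => by convert h (-(1 + n)) using 2 <;> ring
  rw [lambdaVal_eq hα, lambdaVal_eq hβ, h0, hr, hl]

lemma lambdaVal_reflect_at {β : ℤ → ℕ} (hα : ∀ n, 0 < α n) (hβ : ∀ n, 0 < β n) {j : ℤ}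
    (h : ∀ n, α (k + n) = β (j - n)) : lambdaVal α k = lambdaVal β j := by
  rw [← lambdaVal_neg hβ]
  exact lambdaVal_congr hα (fun n => hβ _) fun n => by rw [h]; congr 1; ring

lemma lambdaVal_periodicSeq_zero : lambdaVal periodicSeq 0 = Real.sqrt 689 / 8 := by
  rw [lambdaVal_eq periodicSeq_isOneTwo.pos, rightVal_periodicSeq_zero, leftVal_periodicSeq_zero]
  norm_num [periodicSeq]
  ring

lemma isolated_mem_Ioo : Real.sqrt 689 / 8 ∈
    Ioo (4 * Real.sqrt 6 / 3) ((18879 + 800 * Real.sqrt 30) / 7089) := by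
  have h1 : Real.sqrt 6 < 2.45 := by rw [Real.sqrt_lt' (by norm_num)]; norm_num
  have h2 : 26.248 < Real.sqrt 689 := by rw [Real.lt_sqrt (by norm_num)]; norm_num
  have h3 : Real.sqrt 689 < 26.2489 := by rw [Real.sqrt_lt' (by norm_num)]; norm_num
  have h4 : 5.477 < Real.sqrt 30 := by rw [Real.lt_sqrt (by norm_num)]; norm_num
  norm_num at h1 h2 h3 h4
  constructor <;> linarith

lemma small_lt_gapLeft : (97 / 30 : ℝ) < 4 * Real.sqrt 6 / 3 := by
  have := lt_gapLeft
  norm_num at this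
  linarith

lemma isGreatest_periodicSeq :
    IsGreatest (range (lambdaVal periodicSeq)) (Real.sqrt 689 / 8) := by
  have hp := periodicSeq_isOneTwo.pos
  refine ⟨⟨0, lambdaVal_periodicSeq_zero⟩, ?_⟩
  rintro _ ⟨k, rfl⟩
  by_cases h0 : k % 8 = 0
  · refine ((lambdaVal_congr hp hp fun n => ?_).trans lambdaVal_periodicSeq_zero).le
    unfold periodicSeq; congr 1; grind
  by_cases h5 : k % 8 = 5
  · refine ((lambdaVal_reflect_at hp hp fun n => ?_).trans lambdaVal_periodicSeq_zero).le
    unfold periodicSeq; congr 1; grind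
  · refine (periodicSeq_isOneTwo.lambdaVal_le_of_small ?_).trans
      (small_lt_gapLeft.trans isolated_mem_Ioo.1).le
    unfold periodicSeq
    grind

lemma Admissible.isGreatest_of_prefix (h : Admissible α) (hk : IsLarge α k)
    (hl : LeftPrefix α k [1, 1, 2, 1, 2, 2, 1, 2, 1, 1])
    (hr : RightPrefix α k [1, 2, 2, 1, 2, 1, 1, 2, 1, 2]) :
    IsGreatest (range (lambdaVal α)) (Real.sqrt 689 / 8) := by
  have e : range (lambdaVal α) = range (lambdaVal periodicSeq) := by
    rw [← (Equiv.addLeft k).surjective.range_comp (lambdaVal α)]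
    congr 1
    funext j
    refine lambdaVal_congr h.isOneTwo.pos periodicSeq_isOneTwo.pos fun n => ?_
    rw [← h.eq_periodicSeq ⟨hk.eq_two h.isOneTwo, hl, hr⟩ (j + n), Equiv.coe_addLeft, add_assoc]
  rw [e]
  exact isGreatest_periodicSeq

lemma Admissible.isGreatest (h : Admissible α) (hk : 4 * Real.sqrt 6 / 3 < lambdaVal α k) :
    IsGreatest (range (lambdaVal α)) (Real.sqrt 689 / 8) := by
  have hL := isLarge_of_lt hk
  have hL' := hL.reflect h.isOneTwo
  rcases h.window_cases hL with ⟨hl, hr⟩ | ⟨hl, hr⟩ | ⟨hl, hr⟩ | ⟨hl, hr⟩ | ⟨hl, hr⟩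
  · exact absurd hk (h.lambdaVal_le_of_1112 (by simp_all [LeftPrefix])
      (by simp_all [RightPrefix])).not_gt
  · exact h.isGreatest_of_prefix hL hl hr
  · exact (h.false_of_palindrome hL hl hr).elim
  · rw [← range_lambdaVal_reflect h.isOneTwo.pos]
    exact h.reflect.isGreatest_of_prefix hL' ((rightPrefix_iff _).1 hr) ((leftPrefix_iff _).1 hl)
  · exact (h.reflect.false_of_palindrome hL' ((rightPrefix_iff _).1 hr)
      ((leftPrefix_iff _).1 hl)).elim

lemma eq_of_mem_markovSpectrum (hx : x ∈ markovSpectrum)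
    (hI : x ∈ Ioo (4 * Real.sqrt 6 / 3) ((18879 + 800 * Real.sqrt 30) / 7089)) :
    x = Real.sqrt 689 / 8 := by
  obtain ⟨α, hα, hb, rfl⟩ := hx
  have hlt k : lambdaVal α k < (18879 + 800 * Real.sqrt 30) / 7089 := (le_ciSup hb k).trans_lt hI.2
  obtain ⟨k, hk⟩ := exists_lt_of_lt_ciSup hI.1
  exact (Admissible.isGreatest ⟨isOneTwo_of_lambdaVal_lt hα hlt, hlt⟩ hk).csSup_eq

/-! ### The left endpoint -/

/-- The sequence of period `2111`. -/
def leftSeq (n : ℤ) : ℕ := if n % 4 = 0 then 2 else 1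

lemma leftSeq_isOneTwo : IsOneTwo leftSeq := fun n => by
  unfold leftSeq
  split <;> simp

lemma rightVal_leftSeq_zero : rightVal leftSeq 0 = 2 * Real.sqrt 6 / 3 - 1 := by
  have hp := leftSeq_isOneTwo.pos
  have e : rightVal leftSeq 4 = rightVal leftSeq 0 :=
    rightVal_congr fun n => by unfold leftSeq; congr 1; grind
  have xp := rightVal_pos (k := 0) hp
  have h0 := rightVal_rec (k := 0) hp
  have h1 := rightVal_rec (k := 1) hp
  have h2 := rightVal_rec (k := 2) hp
  have h3 := rightVal_rec (k := 3) hp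
  norm_num [leftSeq] at h0 h1 h2 h3
  rw [h1, h2, h3, e] at h0
  generalize rightVal leftSeq 0 = x at *
  have hs : Real.sqrt 6 = 3 / 2 * (x + 1) := by
    rw [Real.sqrt_eq_iff_mul_self_eq (by norm_num) (by linarith)]
    field_simp at h0
    nlinarith
  rw [hs]
  ring

lemma isGreatest_leftSeq : IsGreatest (range (lambdaVal leftSeq)) (4 * Real.sqrt 6 / 3) := by
  have hp := leftSeq_isOneTwo.pos
  have e : leftVal leftSeq 0 = rightVal leftSeq 0 :=
    leftVal_eq_rightVal fun n => by unfold leftSeq; congr 1; grind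
  have h0 : lambdaVal leftSeq 0 = 4 * Real.sqrt 6 / 3 := by
    rw [lambdaVal_eq hp, e, rightVal_leftSeq_zero]
    norm_num [leftSeq]
    ring
  refine ⟨⟨0, h0⟩, ?_⟩
  rintro _ ⟨k, rfl⟩
  by_cases hk : k % 4 = 0
  · refine ((lambdaVal_congr hp hp fun n => ?_).trans h0).le
    unfold leftSeq; congr 1; grind
  · exact (leftSeq_isOneTwo.lambdaVal_le_of_small (by simp [leftSeq, hk])).trans
      small_lt_gapLeft.le

/-! ### The right endpoint -/

/-- The palindrome `122121121221`, centred at `-3 / 2`, continued to both sides with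
period `2221`. -/
def rightSeq (n : ℤ) : ℕ :=
  if n = -2 ∨ n = -1 ∨ n = -4 ∨ n = 1 ∨ (4 ≤ n ∧ n % 4 = 0) ∨ (n ≤ -7 ∧ n % 4 = 1) then 1 else 2

lemma rightSeq_isOneTwo : IsOneTwo rightSeq := fun n => by
  unfold rightSeq
  split <;> simp

lemma rightVal_rightSeq_four : rightVal rightSeq 4 = (Real.sqrt 30 - 3) / 6 := by
  have hp := rightSeq_isOneTwo.pos
  have e : rightVal rightSeq 8 = rightVal rightSeq 4 :=
    rightVal_congr fun n => by unfold rightSeq; congr 1; grind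
  have xp := rightVal_pos (k := 4) hp
  have h4 := rightVal_rec (k := 4) hp
  have h5 := rightVal_rec (k := 5) hp
  have h6 := rightVal_rec (k := 6) hp
  have h7 := rightVal_rec (k := 7) hp
  norm_num [rightSeq] at h4 h5 h6 h7
  rw [h5, h6, h7, e] at h4
  generalize rightVal rightSeq 4 = x at *
  have hs : Real.sqrt 30 = 6 * x + 3 := by
    rw [Real.sqrt_eq_iff_mul_self_eq (by norm_num) (by linarith)]
    field_simp at h4
    nlinarith
  rw [hs]
  ring

lemma isGreatest_rightSeq :
    IsGreatest (range (lambdaVal rightSeq)) ((18879 + 800 * Real.sqrt 30) / 7089) := by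
  have hp := rightSeq_isOneTwo.pos
  have e : leftVal rightSeq (0 - 7) = rightVal rightSeq 4 :=
    leftVal_eq_rightVal fun n => by unfold rightSeq; congr 1; grind
  have h0 : lambdaVal rightSeq 0 = (18879 + 800 * Real.sqrt 30) / 7089 := by
    rw [lambdaVal_eq hp, gapRight_eq,
      rightSeq_isOneTwo.rightVal_of_1221 (by simp [RightPrefix, rightSeq]),
      rightSeq_isOneTwo.leftVal_of_1121221 (by simp [LeftPrefix, rightSeq]), e, zero_add,
      rightVal_rightSeq_four]
    norm_num [rightSeq]
  refine ⟨⟨0, h0⟩, ?_⟩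
  rintro _ ⟨k, rfl⟩
  by_cases hk0 : k = 0
  · rw [hk0, h0]
  by_cases hk3 : k = -3
  · refine ((lambdaVal_reflect_at hp hp fun n => ?_).trans h0).le
    unfold rightSeq; congr 1; grind
  · refine (rightSeq_isOneTwo.lambdaVal_le_of_small ?_).trans
      (small_lt_gapLeft.trans (isolated_mem_Ioo.1.trans isolated_mem_Ioo.2)).le
    unfold rightSeq
    grind

end

/-- The intersection of the Markov spectrum with the open interval consists of
exactly one (hence isolated) point, and both endpoints belong to the Markov
spectrum. -/
theorem markov_gap_9 :
    markovSpectrum ∩ Ioo (4 * Real.sqrt 6 / 3) ((18879 + 800 * Real.sqrt 30) / 7089) = {(Real.sqrt 689 / 8 : ℝ)} ∧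
    (4 * Real.sqrt 6 / 3) ∈ markovSpectrum ∧ ((18879 + 800 * Real.sqrt 30) / 7089) ∈ markovSpectrum := by
  refine ⟨eq_singleton_iff_unique_mem.2 ⟨⟨mem_markovSpectrum_of_isGreatest periodicSeq_isOneTwo.pos
    isGreatest_periodicSeq, isolated_mem_Ioo⟩, fun x hx => eq_of_mem_markovSpectrum hx.1 hx.2⟩,
    mem_markovSpectrum_of_isGreatest leftSeq_isOneTwo.pos isGreatest_leftSeq,
    mem_markovSpectrum_of_isGreatest rightSeq_isOneTwo.pos isGreatest_rightSeq⟩
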